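/- Let C be an [n,k] linear code over F_q. Then for every 1 ≤ i ≤ k, the i-th bottom-up greedy weight of C equals the i-th bottom-up greedy weight of its matroid M_C: e_i(C) = e_i(M_C). -/

import Mathlib

open Finset
open scoped Classical

noncomputable section

/-- The rank in the matroid `M_C`: `r(X)` is the rank of the column submatrix `H_X`. -/
def colRank {F : Type*} [Field F] {m n : ℕ} (H : Matrix (Fin m) (Fin n) F)
    (X : Finset (Fin n)) : ℕ :=
  Module.finrank F (Submodule.span F ((fun j i => H i j) '' (X : Set (Fin n))))

/-- The nullity function of the matroid `M_C`: `n(X) = |X| - r(X)`. -/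
def nulC {F : Type*} [Field F] {m n : ℕ} (H : Matrix (Fin m) (Fin n) F)
    (X : Finset (Fin n)) : ℕ :=
  X.card - colRank H X

/-- The support of a word. -/
def supp {F : Type*} [Field F] {n : ℕ} (c : Fin n → F) : Finset (Fin n) :=
  Finset.univ.filter (fun i => c i ≠ 0)

/-- The support of a subcode. -/
def suppD {F : Type*} [Field F] {n : ℕ} (D : Submodule F (Fin n → F)) : Finset (Fin n) :=
  Finset.univ.filter (fun i => ∃ c ∈ D, c i ≠ 0)

/-- The weight of a subcode: the cardinality of its support. -/
def wt {F : Type*} [Field F] {n : ℕ} (D : Submodule F (Fin n → F)) : ℕ := (suppD D).card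

/-- The subcode `C(X) = {c ∈ C : Supp(c) ⊆ X}`. -/
def codeRestrict {F : Type*} [Field F] {n : ℕ} (C : Submodule F (Fin n → F))
    (X : Finset (Fin n)) : Submodule F (Fin n → F) where
  carrier := {c | c ∈ C ∧ ∀ i ∉ X, c i = 0}
  add_mem' := by
    rintro a b ⟨ha, ha0⟩ ⟨hb, hb0⟩
    exact ⟨C.add_mem ha hb, fun i hi => by simp [Pi.add_apply, ha0 i hi, hb0 i hi]⟩
  zero_mem' := ⟨C.zero_mem, fun i _ => rfl⟩
  smul_mem' := by
    rintro r a ⟨ha, ha0⟩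
    exact ⟨C.smul_mem r ha, fun i hi => by simp [Pi.smul_apply, ha0 i hi]⟩

/-- The code defined by the parity check matrix `H`: `C = {x : H x = 0}`. -/
def codeOf {F : Type*} [Field F] {m n : ℕ} (H : Matrix (Fin m) (Fin n) F) :
    Submodule F (Fin n → F) :=
  LinearMap.ker H.mulVecLin

/-- The `r`-th generalized Hamming weight of a code `C`. -/
def dC {F : Type*} [Field F] {n : ℕ} (C : Submodule F (Fin n → F)) (r : ℕ) : ℕ :=
  sInf {w | ∃ D : Submodule F (Fin n → F), D ≤ C ∧ Module.finrank F D = r ∧ wt D = w}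

/-- `D` computes `d_r(C)`: `D ⊆ C`, `dim D = r` and `wt(D) = d_r(C)`. -/
def Computes {F : Type*} [Field F] {n : ℕ} (C : Submodule F (Fin n → F)) (r : ℕ)
    (D : Submodule F (Fin n → F)) : Prop :=
  D ≤ C ∧ Module.finrank F D = r ∧ wt D = dC C r

end
noncomputable section

/-- `BUG C i` is the set of bottom-up greedy `i`-subcodes of `C`: a bottom-up greedy
`1`-subcode is a `1`-dimensional subcode of minimal weight, and a bottom-up greedy `r`-subcode
(`r ≥ 2`) is an `r`-dimensional subcode containing some bottom-up greedy `(r-1)`-subcode, of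
minimal weight among all such. -/
def BUG {F : Type*} [Field F] {n : ℕ} (C : Submodule F (Fin n → F)) :
    ℕ → Set (Submodule F (Fin n → F))
  | 0 => {⊥}
  | 1 => {D | D ≤ C ∧ Module.finrank F D = 1 ∧
      ∀ D₂ ≤ C, Module.finrank F D₂ = 1 → wt D ≤ wt D₂}
  | (r+2) => {D | D ≤ C ∧ Module.finrank F D = r + 2 ∧ (∃ D' ∈ BUG C (r+1), D' ≤ D) ∧
      ∀ D₂ ≤ C, Module.finrank F D₂ = r + 2 →
        (∃ D₂' ∈ BUG C (r+1), D₂' ≤ D₂) → wt D ≤ wt D₂}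

/-- `w` is the lexicographically smallest element of `A`. -/
def IsLexMin {k : ℕ} (A : Set (Fin k → ℕ)) (w : Fin k → ℕ) : Prop :=
  w ∈ A ∧ ∀ u ∈ A, toLex w ≤ toLex u

/-- `w` is the reverse-lexicographically smallest element of `A`. -/
def IsRevLexMin {k : ℕ} (A : Set (Fin k → ℕ)) (w : Fin k → ℕ) : Prop :=
  w ∈ A ∧ ∀ u ∈ A, toLex (w ∘ Fin.rev) ≤ toLex (u ∘ Fin.rev)

/-- The set `{e(S) : S ∈ Σ}` of cardinality-tuples of chains `σ_1 ⊊ ⋯ ⊊ σ_k` with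
`σ_i ∈ 𝒩_i` for the matroid `M_C` of the code with parity check matrix `H`. -/
def eSetC {F : Type*} [Field F] {m n : ℕ} (H : Matrix (Fin m) (Fin n) F) (k : ℕ) :
    Set (Fin k → ℕ) :=
  {u | ∃ σ : Fin k → Finset (Fin n),
    (StrictMono σ ∧ ∀ i : Fin k, nulC H (σ i) = (i : ℕ) + 1) ∧ ∀ i, (σ i).card = u i}

/-!
A bottom-up greedy subcode `D` is closed, in the sense that every word of `C` supported in `Supp(D)`
lies in `D`: otherwise some such word outside `D` vanishes at a coordinate of `Supp(D)` not used by
the preceding greedy subcode, and adding it to that subcode gives a competitor of `D` of smaller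
weight. As `dim C(X)` is the nullity of `X`, the supports of a full greedy flag therefore form a
chain in `Σ`. That chain is lexicographically minimal: as long as the cardinalities of another chain
`σ` agree with the greedy weights, the subcodes `C(σ_i)` are themselves greedy, so the next one
competes with the next greedy subcode.
-/

section LexMin

variable {k : ℕ} {A : Set (Fin k → ℕ)} {v w : Fin k → ℕ}

theorem IsLexMin.unique (hv : IsLexMin A v) (hw : IsLexMin A w) : v = w :=
  toLex.injective ((hv.2 w hw.1).antisymm (hw.2 v hv.1))

theorem isLexMin_of_forall_le (hw : w ∈ A)
    (h : ∀ u ∈ A, ∀ i, (∀ j < i, u j = w j) → w i ≤ u i) : IsLexMin A w :=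
  ⟨hw, fun u hu => not_lt.1 fun ⟨i, heq, hlt⟩ => (h u hu i heq).not_gt hlt⟩

end LexMin

section ExtendByZero

variable {R ι η : Type*} {s : ι → η}

theorem mem_range_extendByZero_iff [Semiring R] (hs : Function.Injective s) {c : η → R} :
    c ∈ LinearMap.range (Function.ExtendByZero.linearMap R s) ↔ ∀ i ∉ Set.range s, c i = 0 := by
  constructor
  · rintro ⟨v, rfl⟩ i hi
    exact Function.extend_apply' _ _ _ hi
  · refine fun hc => ⟨c ∘ s, funext fun i => ?_⟩
    by_cases hi : i ∈ Set.range s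
    · obtain ⟨j, rfl⟩ := hi
      exact hs.extend_apply _ _ j
    · exact (Function.extend_apply' _ _ _ hi).trans (hc i hi).symm

theorem mulVecLin_comp_extendByZero [CommSemiring R] [Fintype ι] [Fintype η]
    (hs : Function.Injective s) {κ : Type*} (A : Matrix κ η R) :
    A.mulVecLin ∘ₗ Function.ExtendByZero.linearMap R s = (A.submatrix id s).mulVecLin := by
  refine LinearMap.ext fun v => funext fun i => ?_
  refine (Fintype.sum_of_injective s hs _ _ (fun j hj => ?_) fun j => ?_).symm
  · exact mul_eq_zero_of_right _ (Function.extend_apply' _ _ _ hj)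
  · exact congrArg (A i (s j) * ·) (hs.extend_apply v 0 j).symm

end ExtendByZero

section Code

variable {F : Type*} [Field F] {n : ℕ} {C D E : Submodule F (Fin n → F)} {X Y : Finset (Fin n)}
  {r : ℕ}

theorem mem_suppD {i : Fin n} : i ∈ suppD D ↔ ∃ c ∈ D, c i ≠ 0 := by
  simp [suppD]

theorem le_codeRestrict_iff : D ≤ codeRestrict C X ↔ D ≤ C ∧ suppD D ⊆ X := by
  refine ⟨fun h => ⟨fun c hc => (h hc).1, fun i hi => ?_⟩, fun ⟨hDC, hDX⟩ c hc => ⟨hDC hc, ?_⟩⟩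
  · obtain ⟨c, hc, hci⟩ := mem_suppD.1 hi
    exact not_imp_comm.1 ((h hc).2 i) hci
  · exact fun i hi => not_not.1 fun hci => hi (hDX (mem_suppD.2 ⟨c, hc, hci⟩))

theorem codeRestrict_le : codeRestrict C X ≤ C :=
  (le_codeRestrict_iff.1 le_rfl).1

theorem suppD_codeRestrict_subset : suppD (codeRestrict C X) ⊆ X :=
  (le_codeRestrict_iff.1 le_rfl).2

theorem codeRestrict_mono (h : X ⊆ Y) : codeRestrict C X ≤ codeRestrict C Y :=
  le_codeRestrict_iff.2 ⟨codeRestrict_le, suppD_codeRestrict_subset.trans h⟩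

theorem le_codeRestrict_suppD (h : D ≤ C) : D ≤ codeRestrict C (suppD D) :=
  le_codeRestrict_iff.2 ⟨h, Subset.rfl⟩

theorem suppD_mono (h : D ≤ E) : suppD D ⊆ suppD E :=
  (le_codeRestrict_iff.1 (h.trans (le_codeRestrict_suppD le_rfl))).2

theorem wt_mono (h : D ≤ E) : wt D ≤ wt E :=
  card_le_card (suppD_mono h)

theorem wt_codeRestrict_le : wt (codeRestrict C X) ≤ X.card :=
  card_le_card suppD_codeRestrict_subset

theorem codeRestrict_suppD_bot :
    codeRestrict C (suppD (⊥ : Submodule F (Fin n → F))) = ⊥ := by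
  refine eq_bot_iff.2 fun c hc => (Submodule.mem_bot F).2 (funext fun i => hc.2 i ?_)
  simp [mem_suppD]

theorem exists_mem_codeRestrict_erase_notMem (h : D < codeRestrict C X) {z : Fin n}
    (hz : z ∈ suppD D) : ∃ c ∈ codeRestrict C (X.erase z), c ∉ D := by
  obtain ⟨d, hd, hdz⟩ := mem_suppD.1 hz
  obtain ⟨e, he, heD⟩ := SetLike.exists_of_lt h
  have hc : e - (e z / d z) • d ∈ codeRestrict C X :=
    sub_mem he (Submodule.smul_mem _ _ (h.le hd))
  refine ⟨e - (e z / d z) • d, ⟨hc.1, fun i hi => ?_⟩, fun hcD => heD ?_⟩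
  · obtain rfl | hiz := eq_or_ne i z
    · simp [hdz]
    · exact hc.2 i fun hiX => hi (mem_erase.2 ⟨hiz, hiX⟩)
  · simpa using add_mem hcD (D.smul_mem (e z / d z) hd)

/-- The subcodes among which the bottom-up greedy `(r + 1)`-subcodes of `C` are those of minimal
weight. The indexing is uniform in `r`, the zero code being the only greedy `0`-subcode. -/
def bugCandidates (C : Submodule F (Fin n → F)) (r : ℕ) : Set (Submodule F (Fin n → F)) :=
  {D | D ≤ C ∧ Module.finrank F D = r + 1 ∧ ∃ D' ∈ BUG C r, D' ≤ D}

theorem mem_bug_succ_iff :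
    D ∈ BUG C (r + 1) ↔ D ∈ bugCandidates C r ∧ ∀ E ∈ bugCandidates C r, wt D ≤ wt E := by
  cases r <;> simp [BUG, bugCandidates, and_assoc]

theorem le_of_mem_bug (h : D ∈ BUG C r) : D ≤ C := by
  cases r with
  | zero => exact (Set.mem_singleton_iff.1 h).trans_le bot_le
  | succ r => exact (mem_bug_succ_iff.1 h).1.1

theorem finrank_of_mem_bug (h : D ∈ BUG C r) : Module.finrank F D = r := by
  cases r with
  | zero => rw [Set.mem_singleton_iff.1 h, finrank_bot]
  | succ r => exact (mem_bug_succ_iff.1 h).1.2.1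

theorem wt_eq_of_mem_bug (hD : D ∈ BUG C r) (hE : E ∈ BUG C r) : wt D = wt E := by
  cases r with
  | zero => rw [Set.mem_singleton_iff.1 hD, Set.mem_singleton_iff.1 hE]
  | succ r =>
    rw [mem_bug_succ_iff] at hD hE
    exact (hD.2 E hE.1).antisymm (hE.2 D hD.1)

theorem mem_bug_succ_of_wt_le (hD : D ∈ bugCandidates C r) (hE : E ∈ BUG C (r + 1))
    (h : wt D ≤ wt E) : D ∈ BUG C (r + 1) :=
  mem_bug_succ_iff.2 ⟨hD, fun D₂ hD₂ => h.trans ((mem_bug_succ_iff.1 hE).2 D₂ hD₂)⟩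

theorem sup_span_singleton_mem_bugCandidates (hD : D ∈ BUG C r) {c : Fin n → F} (hc : c ∈ C)
    (hcD : c ∉ D) : D ⊔ Submodule.span F {c} ∈ bugCandidates C r :=
  ⟨sup_le (le_of_mem_bug hD) ((Submodule.span_singleton_le_iff_mem c C).2 hc),
    by rw [Submodule.finrank_sup_span_singleton hcD, finrank_of_mem_bug hD], D, hD, le_sup_left⟩

theorem bug_nonempty (hr : r ≤ Module.finrank F C) : (BUG C r).Nonempty := by
  induction r with
  | zero => exact Set.singleton_nonempty ⊥
  | succ r ih =>
    obtain ⟨D, hD⟩ := ih (Nat.le_of_succ_le hr)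
    have hDC : D < C := (le_of_mem_bug hD).lt_of_ne fun h => by
      have := finrank_of_mem_bug hD
      rw [h] at this
      omega
    obtain ⟨c, hcC, hcD⟩ := SetLike.exists_of_lt hDC
    obtain ⟨E, hE, hmin⟩ := exists_minimalFor_of_wellFoundedLT (· ∈ bugCandidates C r) wt
      ⟨_, sup_span_singleton_mem_bugCandidates hD hcC hcD⟩
    exact ⟨E, mem_bug_succ_iff.2 ⟨hE, fun D₂ hD₂ => (le_total _ _).elim id (hmin hD₂)⟩⟩

theorem codeRestrict_suppD_of_mem_bug (hD : D ∈ BUG C r) : codeRestrict C (suppD D) = D := by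
  induction r generalizing D with
  | zero => rw [Set.mem_singleton_iff.1 hD, codeRestrict_suppD_bot]
  | succ r ih =>
    obtain ⟨⟨hDC, hDr, D', hD', hD'D⟩, hmin⟩ := mem_bug_succ_iff.1 hD
    by_contra hne
    have hlt : D < codeRestrict C (suppD D) := (le_codeRestrict_suppD hDC).lt_of_ne' hne
    have hsupp : ¬ suppD D ⊆ suppD D' := fun h => by
      have hDD' : D ≤ D' := ih hD' ▸ le_codeRestrict_iff.2 ⟨hDC, h⟩
      have := Submodule.finrank_mono hDD'
      rw [hDr, finrank_of_mem_bug hD'] at this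
      omega
    obtain ⟨z, hz, hzD'⟩ := not_subset.1 hsupp
    obtain ⟨c, hc, hcD⟩ := exists_mem_codeRestrict_erase_notMem hlt hz
    have hle : D' ⊔ Submodule.span F {c} ≤ codeRestrict C ((suppD D).erase z) :=
      sup_le (le_codeRestrict_iff.2
          ⟨le_of_mem_bug hD', subset_erase.2 ⟨suppD_mono hD'D, hzD'⟩⟩)
        ((Submodule.span_singleton_le_iff_mem _ _).2 hc)
    have hwt : wt (D' ⊔ Submodule.span F {c}) < wt D :=
      calc wt (D' ⊔ Submodule.span F {c}) ≤ wt (codeRestrict C ((suppD D).erase z)) := wt_mono hle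
        _ ≤ ((suppD D).erase z).card := wt_codeRestrict_le
        _ < wt D := card_erase_lt_of_mem hz
    exact hwt.not_ge
      (hmin _ (sup_span_singleton_mem_bugCandidates hD' hc.1 fun h => hcD (hD'D h)))

/-- A flag `𝒟 0 ≤ 𝒟 1 ≤ ⋯ ≤ 𝒟 r` of bottom-up greedy subcodes of `C`, with `𝒟 i` of dimension `i`.
The values of `𝒟` beyond `r` are irrelevant. -/
structure IsBUGFlag (C : Submodule F (Fin n → F)) (r : ℕ) (𝒟 : ℕ → Submodule F (Fin n → F)) :
    Prop where
  mem_bug : ∀ i ≤ r, 𝒟 i ∈ BUG C i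
  monotoneOn : MonotoneOn 𝒟 (Set.Iic r)

theorem IsBUGFlag.update_succ {𝒟 : ℕ → Submodule F (Fin n → F)} (h : IsBUGFlag C r 𝒟)
    (hE : E ∈ BUG C (r + 1)) (hle : 𝒟 r ≤ E) :
    IsBUGFlag C (r + 1) (Function.update 𝒟 (r + 1) E) := by
  have hlast : Function.update 𝒟 (r + 1) E (r + 1) = E := Function.update_self ..
  have hinit : ∀ i ≤ r, Function.update 𝒟 (r + 1) E i = 𝒟 i := fun i hi =>
    Function.update_of_ne (by omega) ..
  constructor
  · intro i hi
    obtain hi | rfl := Nat.le_succ_iff.1 hi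
    · exact hinit i hi ▸ h.mem_bug i hi
    · exact hlast.symm ▸ hE
  · intro i hi j hj hij
    obtain hj | rfl := Nat.le_succ_iff.1 hj
    · rw [hinit i (hij.trans hj), hinit j hj]
      exact h.monotoneOn (hij.trans hj) hj hij
    · obtain hi | rfl := Nat.le_succ_iff.1 hi
      · rw [hinit i hi, hlast]
        exact (h.monotoneOn hi Set.self_mem_Iic hi).trans hle
      · exact le_rfl

theorem exists_isBUGFlag (hD : D ∈ BUG C r) : ∃ 𝒟, IsBUGFlag C r 𝒟 ∧ 𝒟 r = D := by
  induction r generalizing D with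
  | zero =>
    refine ⟨fun _ => D, ⟨fun i hi => ?_, monotoneOn_const⟩, rfl⟩
    rwa [Nat.le_zero.1 hi]
  | succ r ih =>
    obtain ⟨-, -, D', hD', hD'D⟩ := (mem_bug_succ_iff.1 hD).1
    obtain ⟨𝒟, h𝒟, rfl⟩ := ih hD'
    exact ⟨_, h𝒟.update_succ hD hD'D, Function.update_self ..⟩

theorem codeRestrict_mem_bugCandidates {k : ℕ} {σ : Fin k → Finset (Fin n)} (hσ : Monotone σ)
    (hrank : ∀ i, Module.finrank F (codeRestrict C (σ i)) = i + 1) (i : Fin k)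
    (h : ∀ j < i, ∃ E ∈ BUG C (j + 1), (σ j).card ≤ wt E) :
    codeRestrict C (σ i) ∈ bugCandidates C i := by
  obtain ⟨i, hi⟩ := i
  refine ⟨codeRestrict_le, hrank _, ?_⟩
  induction i with
  | zero => exact ⟨⊥, rfl, bot_le⟩
  | succ i ih =>
    have hlt : (⟨i, by omega⟩ : Fin k) < ⟨i + 1, hi⟩ := Nat.lt_succ_self i
    have hcand : codeRestrict C (σ ⟨i, by omega⟩) ∈ bugCandidates C i :=
      ⟨codeRestrict_le, hrank _, ih _ fun j hj => h j (hj.trans hlt)⟩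
    obtain ⟨E, hE, hσE⟩ := h _ hlt
    exact ⟨_, mem_bug_succ_of_wt_le hcand hE (wt_codeRestrict_le.trans hσE),
      codeRestrict_mono (hσ hlt.le)⟩

end Code

section ParityCheck

variable {F : Type*} [Field F] {m n : ℕ} (H : Matrix (Fin m) (Fin n) F)

theorem colRank_eq_rank_submatrix (X : Finset (Fin n)) :
    colRank H X = (H.submatrix id ((↑) : X → Fin n)).rank := by
  rw [Matrix.rank_eq_finrank_span_cols, colRank, Set.image_eq_range]
  rfl

theorem map_ker_submatrix_eq_codeRestrict (X : Finset (Fin n)) :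
    (LinearMap.ker (H.submatrix id ((↑) : X → Fin n)).mulVecLin).map
      (Function.ExtendByZero.linearMap F (↑)) = codeRestrict (codeOf H) X := by
  rw [← mulVecLin_comp_extendByZero Subtype.val_injective, LinearMap.ker_comp,
    Submodule.map_comap_eq]
  ext c
  rw [Submodule.mem_inf, mem_range_extendByZero_iff Subtype.val_injective, Subtype.range_coe,
    and_comm]
  rfl

theorem nulC_eq_finrank_codeRestrict (X : Finset (Fin n)) :
    nulC H X = Module.finrank F (codeRestrict (codeOf H) X) := by
  have hinj : Function.Injective (Function.ExtendByZero.linearMap F ((↑) : X → Fin n)) :=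
    Function.extend_injective Subtype.val_injective _
  have hrank := LinearMap.finrank_range_add_finrank_ker
    (H.submatrix id ((↑) : X → Fin n)).mulVecLin
  rw [Module.finrank_fintype_fun_eq_card, Fintype.card_coe] at hrank
  rw [nulC, colRank_eq_rank_submatrix, Matrix.rank, ← hrank, Nat.add_sub_cancel_left,
    ← map_ker_submatrix_eq_codeRestrict]
  exact (Submodule.equivMapOfInjective _ hinj _).finrank_eq

variable {H}

theorem nulC_suppD_of_mem_bug {D : Submodule F (Fin n → F)} {r : ℕ} (hD : D ∈ BUG (codeOf H) r) :
    nulC H (suppD D) = r := by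
  rw [nulC_eq_finrank_codeRestrict, codeRestrict_suppD_of_mem_bug hD, finrank_of_mem_bug hD]

theorem le_finrank_codeOf_of_mem_eSetC {k : ℕ} {u : Fin k → ℕ} (hu : u ∈ eSetC H k) :
    k ≤ Module.finrank F (codeOf H) := by
  obtain ⟨σ, ⟨-, hnul⟩, -⟩ := hu
  cases k with
  | zero => exact Nat.zero_le _
  | succ k =>
    calc k + 1 = Module.finrank F (codeRestrict (codeOf H) (σ (Fin.last k))) := by
          rw [← nulC_eq_finrank_codeRestrict, hnul, Fin.val_last]
      _ ≤ Module.finrank F (codeOf H) := Submodule.finrank_mono codeRestrict_le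

variable {k : ℕ} {𝒟 : ℕ → Submodule F (Fin n → F)}

theorem IsBUGFlag.wt_mem_eSetC (h : IsBUGFlag (codeOf H) k 𝒟) :
    (fun i : Fin k => wt (𝒟 (i + 1))) ∈ eSetC H k := by
  have hnul (i : Fin k) : nulC H (suppD (𝒟 (i + 1))) = i + 1 :=
    nulC_suppD_of_mem_bug (h.mem_bug _ i.2)
  have hmono : Monotone fun i : Fin k => suppD (𝒟 (i + 1)) := fun i j hij =>
    suppD_mono (h.monotoneOn i.2 j.2 (Nat.succ_le_succ hij))
  have hinj : Function.Injective fun i : Fin k => suppD (𝒟 (i + 1)) := fun i j hij => by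
    have := congrArg (nulC H) hij
    simp only [hnul] at this
    omega
  exact ⟨_, ⟨hmono.strictMono_of_injective hinj, hnul⟩, fun _ => rfl⟩

theorem IsBUGFlag.isLexMin_eSetC (h : IsBUGFlag (codeOf H) k 𝒟) :
    IsLexMin (eSetC H k) fun i => wt (𝒟 (i + 1)) := by
  refine isLexMin_of_forall_le h.wt_mem_eSetC ?_
  rintro u ⟨σ, ⟨hσ, hnul⟩, hcard⟩ i heq
  have hcand : codeRestrict (codeOf H) (σ i) ∈ bugCandidates (codeOf H) i :=
    codeRestrict_mem_bugCandidates hσ.monotone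
      (fun j => (nulC_eq_finrank_codeRestrict H (σ j)).symm.trans (hnul j)) i
      fun j hj => ⟨𝒟 (j + 1), h.mem_bug _ j.2, ((hcard j).trans (heq j hj)).le⟩
  calc wt (𝒟 (i + 1)) ≤ wt (codeRestrict (codeOf H) (σ i)) :=
        (mem_bug_succ_iff.1 (h.mem_bug _ i.2)).2 _ hcand
    _ ≤ (σ i).card := wt_codeRestrict_le
    _ = u i := hcard i

end ParityCheck

theorem statement12_general {F : Type*} [Field F] {m k n : ℕ} (H : Matrix (Fin m) (Fin n) F)
    (w : Fin k → ℕ) (hw : IsLexMin (eSetC H k) w) :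
    ∀ i : Fin k, ∀ D ∈ BUG (codeOf H) ((i : ℕ) + 1), wt D = w i := by
  intro i D hD
  obtain ⟨E, hE⟩ := bug_nonempty (le_finrank_codeOf_of_mem_eSetC hw.1)
  obtain ⟨𝒟, h𝒟, -⟩ := exists_isBUGFlag hE
  calc wt D = wt (𝒟 (i + 1)) := wt_eq_of_mem_bug hD (h𝒟.mem_bug _ i.2)
    _ = w i := congrFun (h𝒟.isLexMin_eSetC.unique hw) i

/-- the bottom-up greedy weights of an `[n,k]` code `C` coincide with the
bottom-up greedy weights of its matroid `M_C`: if `w = (e_1(M_C),…,e_k(M_C))` is the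
lexicographic minimum of `{e(S) : S ∈ Σ}` then the weight of any bottom-up greedy
`i`-subcode of `C` is `w i`. -/
theorem statement12 {F : Type*} [Field F] [Fintype F] {m k n : ℕ} (hmk : m + k = n)
    (H : Matrix (Fin m) (Fin n) F) (hH : H.rank = m)
    (w : Fin k → ℕ) (hw : IsLexMin (eSetC H k) w) :
    ∀ i : Fin k, ∀ D ∈ BUG (codeOf H) ((i : ℕ) + 1), wt D = w i :=
  statement12_general H w hw

end
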